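/- (A_ℓ Bailey Transform, second orthogonality relation.) Let ℓ ≥ 1, let q, a, x_1, …, x_ℓ be nonzero complex numbers such that every q-shifted factorial occurring in a denominator below is nonzero. With M(i;j) := ∏_{r,s=1}^{ℓ} ((q x_r/x_s) q^{j_r−j_s}; q)_{i_r−j_r}^{−1} · ∏_{k=1}^{ℓ} (a q x_k/x_ℓ; q)_{i_k+(j_1+⋯+j_ℓ)}^{−1} and M*(i;j) := ∏_{k=1}^{ℓ} [1 − a (x_k/x_ℓ) q^{i_k+(i_1+⋯+i_ℓ)}] · ∏_{k=1}^{ℓ} (a q x_k/x_ℓ; q)_{j_k+(i_1+⋯+i_ℓ)−1} · ∏_{r,s=1}^{ℓ} ((q x_r/x_s) q^{j_r−j_s}; q)_{i_r−j_r}^{−1} · (−1)^{|i|−|j|} q^{binom(|i|−|j|,2)}, for all vectors i, j of nonnegative integers of length ℓ, the sum over all vectors y with j_k ≤ y_k ≤ i_k for k = 1, …, ℓ of M*(i;y)·M(y;j) equals ∏_{k=1}^{ℓ} δ(i_k, j_k), where δ(r,s) = 1 if r = s and 0 otherwise. (Together with the first orthogonality relation this says M and M* are mutually inverse infinite lower-triangular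 matrices.) -/

import Mathlib

set_option autoImplicit false
set_option maxHeartbeats 1000000

open Finset

/-- The `q`-shifted factorial `(a; q)_n`, extended to all integers `n` by the
standard convention `(a;q)_{-m} = 1 / ∏_{k=1}^{m} (1 - a q^{-k})`. -/
noncomputable def qp (a q : ℂ) (n : ℤ) : ℂ :=
  if 0 ≤ n then ∏ k ∈ Finset.range n.toNat, (1 - a * q ^ (k : ℤ))
  else (∏ k ∈ Finset.range (-n).toNat, (1 - a * q ^ (-(k : ℤ) - 1)))⁻¹

/-- The `A_ℓ` Bailey transform matrix `M(i;j)`; `xl` denotes `x_ℓ`. -/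
noncomputable def MA (ℓ : ℕ) (q a : ℂ) (x : Fin ℓ → ℂ) (xl : ℂ)
    (i j : Fin ℓ → ℕ) : ℂ :=
  (∏ r, ∏ s,
    (qp (q * (x r / x s) * q ^ ((j r : ℤ) - (j s : ℤ))) q ((i r : ℤ) - (j r : ℤ)))⁻¹) *
  ∏ k, (qp (a * q * (x k / xl)) q ((i k : ℤ) + ∑ s, (j s : ℤ)))⁻¹

/-- The `A_ℓ` Bailey transform matrix `M*(i;j)`; `xl` denotes `x_ℓ`. -/
noncomputable def MAstar (ℓ : ℕ) (q a : ℂ) (x : Fin ℓ → ℂ) (xl : ℂ)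
    (i j : Fin ℓ → ℕ) : ℂ :=
  (∏ k, (1 - a * (x k / xl) * q ^ ((i k : ℤ) + ∑ s, (i s : ℤ)))) *
  (∏ k, qp (a * q * (x k / xl)) q ((j k : ℤ) + (∑ s, (i s : ℤ)) - 1)) *
  (∏ r, ∏ s,
    (qp (q * (x r / x s) * q ^ ((j r : ℤ) - (j s : ℤ))) q ((i r : ℤ) - (j r : ℤ)))⁻¹) *
  (-1 : ℂ) ^ ((∑ s, (i s : ℤ)) - ∑ s, (j s : ℤ)) *
  q ^ (((∑ s, (i s : ℤ)) - ∑ s, (j s : ℤ)) *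
        ((∑ s, (i s : ℤ)) - (∑ s, (j s : ℤ)) - 1) / 2)

open Polynomial in
lemma vanish (ℓ : ℕ) (hℓ : 1 ≤ ℓ) (n : Fin ℓ → ℕ) (v : (Σ _ : Fin ℓ, ℕ) → ℂ)
    (hv : Set.InjOn v ((Finset.univ : Finset (Fin ℓ)).sigma (fun k => range (n k + 1)) : Finset (Σ _ : Fin ℓ, ℕ)))
    (g : Polynomial ℂ) (hg : g.natDegree + 1 ≤ ∑ k, n k) :
    ∑ w ∈ Fintype.piFinset (fun k => range (n k + 1)),
      (∏ k, g.eval (v ⟨k, w k⟩)) * (∏ i, ∏ j ∈ Ioi i, (v ⟨j, w j⟩ - v ⟨i, w i⟩)) *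
      (∏ k, ∏ z ∈ ((Finset.univ : Finset (Fin ℓ)).sigma (fun k => range (n k + 1))).erase ⟨k, w k⟩,
        (v ⟨k, w k⟩ - v z))⁻¹ = 0 := by
  set Z : Finset (Σ _ : Fin ℓ, ℕ) :=
    (Finset.univ : Finset (Fin ℓ)).sigma (fun k => range (n k + 1)) with hZ
  have hcard : Z.card = ∑ k, n k + ℓ := by
    simp [hZ, Finset.card_sigma, Finset.sum_add_distrib]
  let h : Fin ℓ → ℕ → Fin ℓ → ℂ := fun k m j =>
    (g.eval (v ⟨k, m⟩) * (∏ z ∈ Z.erase ⟨k, m⟩, (v ⟨k, m⟩ - v z))⁻¹) * v ⟨k, m⟩ ^ (j : ℕ)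
  have key : Matrix.det (Matrix.of fun k => ∑ m ∈ range (n k + 1), h k m) = 0 := by
    rw [← Matrix.exists_vecMul_eq_zero_iff]
    refine ⟨fun _ => 1, ?_, ?_⟩
    · intro h0
      have := congrFun h0 ⟨0, hℓ⟩
      simp at this
    · ext j
      simp only [Matrix.vecMul, dotProduct, one_mul, Pi.zero_apply, Matrix.of_apply, Finset.sum_apply]
      have hdeg : (g * X ^ (j : ℕ)).natDegree ≤ (∑ k, n k - 1) + (ℓ - 1) := by
        refine natDegree_mul_le.trans ?_
        rw [natDegree_X_pow]
        have := j.2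
        omega
      have h1 := Lagrange.coeff_eq_sum (s := Z) (v := v) hv (P := g * X ^ (j : ℕ)) (by
        refine lt_of_le_of_lt degree_le_natDegree ?_
        rw [hcard]
        exact_mod_cast lt_of_le_of_lt hdeg (by omega))
      rw [coeff_eq_zero_of_natDegree_lt (by omega)] at h1
      rw [h1, hZ, Finset.sum_sigma]
      refine Finset.sum_congr rfl fun k _ => Finset.sum_congr rfl fun m _ => ?_
      simp only [h, eval_mul, eval_pow, eval_X, ← hZ]
      rw [div_eq_mul_inv]; ring
  have e := (Matrix.detRowAlternating (R := ℂ) (n := Fin ℓ)).toMultilinearMap.map_sum_finset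
    h (fun k => range (n k + 1))
  have e' : Matrix.det (Matrix.of fun k => ∑ m ∈ range (n k + 1), h k m) =
    ∑ w ∈ Fintype.piFinset (fun k => range (n k + 1)), Matrix.det (Matrix.of fun k => h k (w k)) := e
  rw [← key, e']
  refine Finset.sum_congr rfl fun w _ => ?_
  have := Matrix.det_mul_column (fun k => (g.eval (v ⟨k, w k⟩) * (∏ z ∈ Z.erase ⟨k, w k⟩, (v ⟨k, w k⟩ - v z))⁻¹)) (Matrix.vandermonde (fun k => v ⟨k, w k⟩))
  rw [Matrix.det_vandermonde, Finset.prod_mul_distrib, Finset.prod_inv_distrib] at this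
  rw [mul_right_comm, ← this]
  rfl

lemma pow_mul_prod (c : ℂ) (t : ℕ) (f : ℕ → ℂ) :
    c ^ t * ∏ m ∈ range t, f m = ∏ m ∈ range t, (c * f m) := by
  rw [Finset.prod_mul_distrib, Finset.prod_const, Finset.card_range]

lemma pair_id (q A B : ℂ) (t p : ℕ) :
    (∏ m ∈ range (p + 1), (B * q ^ t - A * q ^ m)) * (∏ m ∈ range t, (A * q ^ p - B * q ^ m)) =
     (B - A) * q ^ (p * t) * (∏ m ∈ range p, (B - A * q ^ (m + 1))) *
      ∏ m ∈ range t, (A - B * q ^ (m + 1)) := by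
  induction p with
  | zero =>
    have h1 := Finset.prod_range_succ (fun m => A - B * q ^ m) t
    have h2 := Finset.prod_range_succ' (fun m => A - B * q ^ m) t
    rw [h1] at h2
    simp at h2 ⊢
    linear_combination -h2
  | succ p ih =>
    have h1 := Finset.prod_range_succ (fun m => A * q ^ (p + 1) - B * q ^ m) t
    have h2 := Finset.prod_range_succ' (fun m => A * q ^ (p + 1) - B * q ^ m) t
    have h3 : ∏ m ∈ range t, (A * q ^ (p + 1) - B * q ^ (m + 1)) =
        q ^ t * ∏ m ∈ range t, (A * q ^ p - B * q ^ m) := by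
      rw [pow_mul_prod]
      exact Finset.prod_congr rfl fun m _ => by ring
    rw [h1, h3] at h2
    rw [Finset.prod_range_succ _ (p + 1), Finset.prod_range_succ (fun m => B - A * q ^ (m + 1)) p,
      add_mul, pow_add q (p * t)]
    simp only [pow_zero, mul_one, one_mul] at h2 ⊢
    linear_combination (-(∏ m ∈ range (p + 1), (B * q ^ t - A * q ^ m))) * h2 +
      q ^ t * (B - A * q ^ (p + 1)) * ih

lemma diag_id (q A : ℂ) (w : ℕ) :
    ∏ m ∈ range w, (A * q ^ w - A * q ^ m) =
      (-1) ^ w * q ^ (w.choose 2) * ∏ m ∈ range w, (A - A * q ^ (m + 1)) := by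
  induction w with
  | zero => simp
  | succ w ih =>
    have h3 : ∏ m ∈ range w, (A * q ^ (w + 1) - A * q ^ (m + 1)) =
        q ^ w * ∏ m ∈ range w, (A * q ^ w - A * q ^ m) := by
      rw [pow_mul_prod]
      exact Finset.prod_congr rfl fun m _ => by ring
    rw [Finset.prod_range_succ', h3, ih, Finset.prod_range_succ, Nat.choose_succ_succ' w 1,
      Nat.choose_one_right]
    ring

lemma split_prod (ℓ : ℕ) (f : Fin ℓ → Fin ℓ → ℂ) :
    ∏ s, ∏ r, f r s = (∏ s, f s s) * ∏ i, ∏ j ∈ Ioi i, f j i * f i j := by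
  rw [Finset.prod_prod_Ioi_mul_eq_prod_prod_off_diag, ← Finset.prod_mul_distrib]
  refine Finset.prod_congr rfl fun s _ => ?_
  exact Fintype.prod_eq_mul_prod_compl s (fun r => f r s)

lemma two_choose (m : ℕ) : 2 * m.choose 2 + m = m * m := by
  induction m with
  | zero => simp
  | succ m ih => rw [Nat.choose_succ_succ' m 1, Nat.choose_one_right]; linarith

lemma choose_sum (ℓ : ℕ) (w : Fin ℓ → ℕ) :
    (∑ s, (w s).choose 2) + ∑ i, ∑ j ∈ Ioi i, w i * w j = (∑ s, w s).choose 2 := by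
  have h := Finset.sum_sum_Ioi_add_eq_sum_sum_off_diag (fun i j => w i * w j)
  have h2 : ∑ i, ∑ j ∈ Ioi i, (w j * w i + w i * w j) = 2 * ∑ i, ∑ j ∈ Ioi i, w i * w j := by
    simp only [Finset.mul_sum]
    exact Finset.sum_congr rfl fun _ _ => Finset.sum_congr rfl fun _ _ => by ring
  have h3 : (∑ s, w s * w s) + ∑ i, ∑ j ∈ ({i}ᶜ : Finset (Fin ℓ)), w j * w i = (∑ s, w s) * (∑ s, w s) := by
    rw [← Finset.sum_add_distrib, Finset.mul_sum]
    refine Finset.sum_congr rfl fun s _ => ?_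
    rw [← Fintype.sum_eq_add_sum_compl s (fun j => w j * w s), Finset.sum_mul]
  have h4 : 2 * (∑ s, (w s).choose 2) + ∑ s, w s = ∑ s, w s * w s := by
    rw [Finset.mul_sum, ← Finset.sum_add_distrib]
    exact Finset.sum_congr rfl fun s _ => two_choose _
  have h5 := two_choose (∑ s, w s)
  omega

lemma L_id (ℓ : ℕ) (q : ℂ) (X : Fin ℓ → ℂ) (w : Fin ℓ → ℕ) :
    ∏ s, ∏ r, (if r = s then ∏ m ∈ range (w r), (X s * q ^ w s - X r * q ^ m)
      else ∏ m ∈ range (w r + 1), (X s * q ^ w s - X r * q ^ m)) =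
    (∏ s, ∏ r, ∏ m ∈ range (w r), (X s - X r * q ^ (m + 1))) *
    (∏ i, ∏ j ∈ Ioi i, (X j * q ^ w j - X i * q ^ w i)) *
    (∏ i, ∏ j ∈ Ioi i, (X i - X j)) * ((-1) ^ (∑ s, w s) * q ^ ((∑ s, w s).choose 2)) := by
  rw [split_prod, split_prod ℓ (fun r s => ∏ m ∈ range (w r), (X s - X r * q ^ (m + 1))),
    ← choose_sum, pow_add, ← Finset.prod_pow_eq_pow_sum, ← Finset.prod_pow_eq_pow_sum,
    ← Finset.prod_pow_eq_pow_sum]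
  have h1 : ∀ i, ∏ j ∈ Ioi i,
      ((if j = i then ∏ m ∈ range (w j), (X i * q ^ w i - X j * q ^ m)
      else ∏ m ∈ range (w j + 1), (X i * q ^ w i - X j * q ^ m)) *
      (if i = j then ∏ m ∈ range (w i), (X j * q ^ w j - X i * q ^ m)
      else ∏ m ∈ range (w i + 1), (X j * q ^ w j - X i * q ^ m))) =
      (∏ j ∈ Ioi i, ((∏ m ∈ range (w j), (X i - X j * q ^ (m + 1))) *
        ∏ m ∈ range (w i), (X j - X i * q ^ (m + 1)))) *
      (∏ j ∈ Ioi i, (X j * q ^ w j - X i * q ^ w i)) *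
      (∏ j ∈ Ioi i, (X i - X j)) * q ^ (∑ j ∈ Ioi i, w i * w j) := by
    intro i
    rw [← Finset.prod_pow_eq_pow_sum, ← Finset.prod_mul_distrib, ← Finset.prod_mul_distrib,
      ← Finset.prod_mul_distrib]
    refine Finset.prod_congr rfl fun j hj => ?_
    have hij : i < j := by simpa using hj
    rw [if_neg hij.ne', if_neg hij.ne]
    have := pair_id q (X j) (X i) (w i) (w j)
    rw [Finset.prod_range_succ _ (w i), mul_comm (w i) (w j)]
    linear_combination (X j * q ^ w j - X i * q ^ w i) * this
  simp only [h1, if_true, diag_id, Finset.prod_mul_distrib]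
  ring

lemma erase_prod (ℓ : ℕ) (n w : Fin ℓ → ℕ) (hw : ∀ k, w k ≤ n k) (s : Fin ℓ)
    (F : Fin ℓ → ℕ → ℂ) :
    ∏ z ∈ ((Finset.univ : Finset (Fin ℓ)).sigma (fun k => range (n k + 1))).erase ⟨s, w s⟩,
        F z.1 z.2 =
    ∏ r, (if r = s then ∏ m ∈ range (w r), F r m else ∏ m ∈ range (w r + 1), F r m) *
      ∏ m ∈ range (n r - w r), F r (w r + 1 + m) := by
  have : ((Finset.univ : Finset (Fin ℓ)).sigma (fun k => range (n k + 1))).erase ⟨s, w s⟩ =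
      (Finset.univ : Finset (Fin ℓ)).sigma
        (fun r => if r = s then (range (n r + 1)).erase (w r) else range (n r + 1)) := by
    ext ⟨r, m⟩
    by_cases h : r = s
    · subst h; simp
    · simp [h]
  rw [this, Finset.prod_sigma]
  refine Finset.prod_congr rfl fun r _ => ?_
  have hn : n r + 1 = (w r + 1) + (n r - w r) := by have := hw r; omega
  by_cases h : r = s
  · subst h
    simp only [if_true]
    rw [hn, Finset.range_eq_Ico]
    have h2 : (Ico 0 (w r + 1 + (n r - w r))).erase (w r) =
        range (w r) ∪ Ico (w r + 1) (w r + 1 + (n r - w r)) := by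
      ext m; simp; omega
    rw [h2, Finset.prod_union, Finset.prod_Ico_eq_prod_range, Nat.add_sub_cancel_left, Finset.range_eq_Ico]
    rw [Finset.disjoint_left]; intro m; simp; omega
  · simp only [if_neg h]
    rw [hn, Finset.prod_range_add]

lemma K_id (ℓ : ℕ) (q : ℂ) (hq : q ≠ 0) (X : Fin ℓ → ℂ) (hX : ∀ k, X k ≠ 0)
    (n w : Fin ℓ → ℕ) (hw : ∀ k, w k ≤ n k) :
    ∏ s, ∏ z ∈ ((Finset.univ : Finset (Fin ℓ)).sigma (fun k => range (n k + 1))).erase ⟨s, w s⟩,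
        (X s * q ^ w s - X z.1 * q ^ z.2) =
    (∏ r, ∏ s, ∏ m ∈ range (n r - w r), (1 - X r * q ^ (w r + 1 + m) / (X s * q ^ w s))) *
    (∏ r, ∏ s, ∏ m ∈ range (w r), (1 - X r * q ^ (m + 1) / X s)) *
    (∏ i, ∏ j ∈ Ioi i, (X j * q ^ w j - X i * q ^ w i)) *
    ((∏ i, ∏ j ∈ Ioi i, (X i - X j)) * (∏ s, X s) ^ (∑ s, n s)) *
    ((-1) ^ (∑ s, w s) *
      q ^ ((∑ s, w s).choose 2 + (∑ s, w s) * (∑ s, (n s - w s)))) := by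
  have e : ∀ s, ∏ z ∈ ((Finset.univ : Finset (Fin ℓ)).sigma
      (fun k => range (n k + 1))).erase ⟨s, w s⟩, (X s * q ^ w s - X z.1 * q ^ z.2) = _ :=
    fun s => erase_prod ℓ n w hw s (fun r m => X s * q ^ w s - X r * q ^ m)
  have hN : ∑ s, n s = ∑ s, w s + ∑ s, (n s - w s) := by
    rw [← Finset.sum_add_distrib]
    exact Finset.sum_congr rfl fun s _ => by have := hw s; omega
  have a1 : ∀ s, ∏ r, ∏ m ∈ range (n r - w r), (X s * q ^ w s - X r * q ^ (w r + 1 + m)) =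
      (X s * q ^ w s) ^ (∑ r, (n r - w r)) *
      ∏ r, ∏ m ∈ range (n r - w r), (1 - X r * q ^ (w r + 1 + m) / (X s * q ^ w s)) := by
    intro s
    rw [← Finset.prod_pow_eq_pow_sum, ← Finset.prod_mul_distrib]
    refine Finset.prod_congr rfl fun r _ => ?_
    rw [pow_mul_prod]
    refine Finset.prod_congr rfl fun m _ => ?_
    have := hX s
    field_simp
  have a2 : ∀ s, ∏ r, ∏ m ∈ range (w r), (X s - X r * q ^ (m + 1)) =
      X s ^ (∑ r, w r) * ∏ r, ∏ m ∈ range (w r), (1 - X r * q ^ (m + 1) / X s) := by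
    intro s
    rw [← Finset.prod_pow_eq_pow_sum, ← Finset.prod_mul_distrib]
    refine Finset.prod_congr rfl fun r _ => ?_
    rw [pow_mul_prod]
    refine Finset.prod_congr rfl fun m _ => ?_
    have := hX s
    field_simp
  simp only [e, Finset.prod_mul_distrib (f := fun r => ite _ _ _)]
  rw [Finset.prod_mul_distrib, L_id]
  simp only [a1, a2]
  rw [Finset.prod_mul_distrib, Finset.prod_mul_distrib, Finset.prod_pow, Finset.prod_pow,
    Finset.prod_mul_distrib, Finset.prod_pow_eq_pow_sum, hN]
  rw [Finset.prod_comm (f := fun r s => ∏ m ∈ range (n r - w r), (1 - X r * q ^ (w r + 1 + m) / (X s * q ^ w s))),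
    Finset.prod_comm (f := fun r s => ∏ m ∈ range (w r), (1 - X r * q ^ (m + 1) / X s))]
  rw [mul_pow, ← pow_mul, pow_add, pow_add]
  ring

lemma qp_nat (a q : ℂ) (n : ℕ) : qp a q (n : ℤ) = ∏ k ∈ range n, (1 - a * q ^ k) := by
  simp [qp]

lemma gen_ne (ℓ : ℕ) (q : ℂ) (x : Fin ℓ → ℂ) (hx : ∀ k, x k ≠ 0) (hq : q ≠ 0)
    (hd1 : ∀ i j : Fin ℓ → ℕ, (∀ k, j k ≤ i k) → ∀ r s : Fin ℓ,
      qp (q * (x r / x s) * q ^ ((j r : ℤ) - (j s : ℤ))) q ((i r : ℤ) - (j r : ℤ)) ≠ 0)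
    (r s : Fin ℓ) (hrs : r ≠ s) (d : ℤ) : x r * q ^ d ≠ x s := by
  intro h
  let j : Fin ℓ → ℕ := fun k => if k = r then (d - 1).toNat else (-(d - 1)).toNat
  have h1 := hd1 (fun k => j k + 1) j (fun k => by simp) r s
  have e1 : (j r : ℤ) - (j s : ℤ) = d - 1 := by
    simp only [j, if_true, if_neg hrs.symm]
    omega
  have e2 : (((j r + 1 : ℕ) : ℤ) - (j r : ℤ)) = ((1 : ℕ) : ℤ) := by push_cast; ring
  rw [e1, e2, qp_nat] at h1
  apply h1
  have := hx s
  simp only [Finset.prod_range_one, pow_zero, mul_one]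
  rw [zpow_sub_one₀ hq]
  field_simp
  rw [← h]; ring

lemma pow_ne (ℓ : ℕ) (q : ℂ) (x : Fin ℓ → ℂ) (hx : ∀ k, x k ≠ 0)
    (hd1 : ∀ i j : Fin ℓ → ℕ, (∀ k, j k ≤ i k) → ∀ r s : Fin ℓ,
      qp (q * (x r / x s) * q ^ ((j r : ℤ) - (j s : ℤ))) q ((i r : ℤ) - (j r : ℤ)) ≠ 0)
    (r : Fin ℓ) (m : ℕ) : q ^ (m + 1) ≠ 1 := by
  intro h
  have h1 := hd1 (fun k => m + 1) (fun _ => 0) (fun k => by simp) r r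
  have e2 : (((m + 1 : ℕ) : ℤ) - ((0 : ℕ) : ℤ)) = ((m + 1 : ℕ) : ℤ) := by push_cast; ring
  rw [e2, qp_nat] at h1
  apply h1
  apply Finset.prod_eq_zero (i := m) (by simp)
  rw [div_self (hx r)]
  simp
  rw [← h]; ring

lemma inj_gen (ℓ : ℕ) (q : ℂ) (x : Fin ℓ → ℂ) (hx : ∀ k, x k ≠ 0) (hq : q ≠ 0)
    (hd1 : ∀ i j : Fin ℓ → ℕ, (∀ k, j k ≤ i k) → ∀ r s : Fin ℓ,
      qp (q * (x r / x s) * q ^ ((j r : ℤ) - (j s : ℤ))) q ((i r : ℤ) - (j r : ℤ)) ≠ 0)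
    (j : Fin ℓ → ℕ) (r s : Fin ℓ) (m p : ℕ)
    (h : x r * q ^ j r * q ^ m = x s * q ^ j s * q ^ p) : r = s ∧ m = p := by
  have key : ∀ m p : ℕ, ∀ r : Fin ℓ, q ^ m = q ^ (p : ℕ) → m ≤ p → m = p := by
    intro m p r h hmp
    obtain ⟨c, rfl⟩ := Nat.exists_eq_add_of_le hmp
    rcases c with _ | c
    · rfl
    · exfalso
      apply pow_ne ℓ q x hx hd1 r c
      rw [pow_add] at h
      have h0 := pow_ne_zero m hq
      exact (mul_left_cancel₀ h0 (by rw [mul_one]; exact h)).symm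
  by_cases hrs : r = s
  · subst hrs
    refine ⟨rfl, ?_⟩
    have h' : q ^ m = q ^ p :=
      mul_left_cancel₀ (mul_ne_zero (hx r) (pow_ne_zero _ hq)) h
    rcases le_total m p with hh | hh
    · exact key m p r h' hh
    · exact (key p m r h'.symm hh).symm
  · exfalso
    apply gen_ne ℓ q x hx hq hd1 r s hrs ((j r : ℤ) + m - j s - p)
    rw [zpow_sub₀ hq, zpow_sub₀ hq, zpow_add₀ hq, zpow_natCast, zpow_natCast, zpow_natCast,
      zpow_natCast]
    field_simp
    linear_combination h

lemma D1_id (q xr xs : ℂ) (hq : q ≠ 0) (jr js wr ws nr : ℕ) (h : wr ≤ nr) :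
    qp (q * (xr / xs) * q ^ (((jr + wr : ℕ) : ℤ) - ((js + ws : ℕ) : ℤ))) q
      (((jr + nr : ℕ) : ℤ) - ((jr + wr : ℕ) : ℤ)) =
    ∏ m ∈ range (nr - wr), (1 - xr * q ^ jr * q ^ (wr + 1 + m) / (xs * q ^ js * q ^ ws)) := by
  have e : (((jr + nr : ℕ) : ℤ) - ((jr + wr : ℕ) : ℤ)) = ((nr - wr : ℕ) : ℤ) := by
    push_cast [h]; ring
  rw [e, qp_nat]
  refine Finset.prod_congr rfl fun m _ => ?_
  rw [zpow_sub₀ hq, zpow_natCast, zpow_natCast]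
  congr 1
  rw [mul_assoc xs, ← pow_add q js ws]
  simp only [div_eq_mul_inv, mul_inv]
  ring

lemma choose_mix (A B : ℕ) : A.choose 2 + A * B + B.choose 2 = (A + B).choose 2 := by
  have h1 := two_choose A
  have h2 := two_choose B
  have h3 := two_choose (A + B)
  nlinarith

lemma int_choose (m : ℕ) : (m : ℤ) * ((m : ℤ) - 1) / 2 = ((m.choose 2 : ℕ) : ℤ) := by
  have h := two_choose m
  have : (m : ℤ) * ((m : ℤ) - 1) = 2 * ((m.choose 2 : ℕ) : ℤ) := by
    zify at h
    linarith
  rw [this, Int.mul_ediv_cancel_left _ (by norm_num)]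

open Polynomial in
lemma main_case (ℓ : ℕ) (hℓ : 1 ≤ ℓ) (q a : ℂ)
    (hq : q ≠ 0) (x : Fin ℓ → ℂ) (hx : ∀ k, x k ≠ 0) (xl : ℂ)
    (hd1 : ∀ i j : Fin ℓ → ℕ, (∀ k, j k ≤ i k) → ∀ r s : Fin ℓ,
      qp (q * (x r / x s) * q ^ ((j r : ℤ) - (j s : ℤ))) q ((i r : ℤ) - (j r : ℤ)) ≠ 0)
    (hd2 : ∀ i j : Fin ℓ → ℕ, (∀ k, j k ≤ i k) → ∀ k : Fin ℓ,
      qp (a * q * (x k / xl)) q ((i k : ℤ) + ∑ s, (j s : ℤ)) ≠ 0)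
    (j n : Fin ℓ → ℕ) (hn : 1 ≤ ∑ k, n k) :
    ∑ w ∈ Fintype.piFinset (fun k => range (n k + 1)),
      MAstar ℓ q a x xl (fun k => j k + n k) (fun k => j k + w k) *
        MA ℓ q a x xl (fun k => j k + w k) j = 0 := by
  let X : Fin ℓ → ℂ := fun k => x k * q ^ j k
  have hX : ∀ k, X k ≠ 0 := fun k => mul_ne_zero (hx k) (pow_ne_zero _ hq)
  let v : (Σ _ : Fin ℓ, ℕ) → ℂ := fun z => X z.1 * q ^ z.2
  have hinj : ∀ r s m p, X r * q ^ m = X s * q ^ p → r = s ∧ m = p :=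
    fun r s m p h => inj_gen ℓ q x hx hq hd1 j r s m p h
  set J := ∑ s, j s with hJ
  set N := ∑ s, n s with hN
  let g : ℂ[X] := ∏ m ∈ range (N - 1), (1 - Polynomial.C (a / xl * q ^ (J + 1 + m)) * Polynomial.X)
  have hg : g.natDegree + 1 ≤ ∑ k, n k := by
    have : g.natDegree ≤ ∑ m ∈ range (N - 1), 1 := by
      refine (natDegree_prod_le _ _).trans (Finset.sum_le_sum fun m _ => ?_)
      refine (natDegree_sub_le _ _).trans ?_
      simp only [natDegree_one, zero_le, sup_of_le_right]
      exact (natDegree_C_mul_le _ _).trans natDegree_X_le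
    simp at this
    omega
  have hvan := vanish ℓ hℓ n v (by
    rintro ⟨r, m⟩ _ ⟨s, p⟩ _ h
    obtain ⟨rfl, rfl⟩ := hinj r s m p h
    rfl) g hg
  set c0 := ∏ i, ∏ j ∈ Ioi i, (X i - X j) with hc0
  let C : ℂ := (∏ k, (1 - a * (x k / xl) * q ^ (((j k + n k : ℕ) : ℤ) + ∑ s, ((j s + n s : ℕ) : ℤ)))) *
    ((-1) ^ N * q ^ (N.choose 2) * (c0 * (∏ s, X s) ^ N))
  rw [← mul_zero C, ← hvan, Finset.mul_sum]
  refine Finset.sum_congr rfl fun w hw => ?_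
  have hw' : ∀ k, w k ≤ n k := by
    intro k
    have := Fintype.mem_piFinset.mp hw k
    simp at this; omega
  have hK := K_id ℓ q hq X hX n w hw'
  rw [← hc0, ← hN] at hK
  have sI : (∑ s, ((j s + n s : ℕ) : ℤ)) - ∑ s, ((j s + w s : ℕ) : ℤ) =
      ((∑ s, (n s - w s) : ℕ) : ℤ) := by
    rw [← Finset.sum_sub_distrib]
    push_cast
    refine Finset.sum_congr rfl fun s _ => ?_
    have := hw' s
    omega
  have sN : N = ∑ s, w s + ∑ s, (n s - w s) := by
    rw [hN, ← Finset.sum_add_distrib]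
    exact Finset.sum_congr rfl fun s _ => by have := hw' s; omega
  have sJN : ∑ s, ((j s + n s : ℕ) : ℤ) = ((J + N : ℕ) : ℤ) := by
    rw [hJ, hN, ← Finset.sum_add_distrib]; push_cast; rfl
  have sJ : ∑ s, (j s : ℤ) = ((J : ℕ) : ℤ) := by rw [hJ]; push_cast; rfl
  -- ratio
  have hrat : ∀ k, qp (a * q * (x k / xl)) q (((j k + w k : ℕ) : ℤ) + (∑ s, ((j s + n s : ℕ) : ℤ)) - 1)
      = qp (a * q * (x k / xl)) q (((j k + w k : ℕ) : ℤ) + ∑ s, (j s : ℤ)) * g.eval (v ⟨k, w k⟩) := by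
    intro k
    have e1 : ((j k + w k : ℕ) : ℤ) + ((J + N : ℕ) : ℤ) - 1 =
      (((j k + w k + J) + (N - 1) : ℕ) : ℤ) := by omega
    have e2 : ((j k + w k : ℕ) : ℤ) + (J : ℤ) = ((j k + w k + J : ℕ) : ℤ) := by omega
    rw [sJN, sJ, e1, e2, qp_nat, qp_nat, Finset.prod_range_add]
    congr 1
    rw [Polynomial.eval_prod]
    refine Finset.prod_congr rfl fun m _ => ?_
    simp only [v, X, eval_sub, eval_one, eval_mul, eval_C, eval_X]
    ring
  have hqp2 : ∏ k, qp (a * q * (x k / xl)) q (((j k + w k : ℕ) : ℤ) + ∑ s, (j s : ℤ)) ≠ 0 :=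
    Finset.prod_ne_zero_iff.mpr fun k _ => hd2 (fun k => j k + w k) j (fun k => by simp) k
  have hD1 : ∀ r s, qp (q * (x r / x s) * q ^ (((j r + w r : ℕ) : ℤ) - ((j s + w s : ℕ) : ℤ))) q
      (((j r + n r : ℕ) : ℤ) - ((j r + w r : ℕ) : ℤ)) = _ :=
    fun r s => D1_id q (x r) (x s) hq (j r) (j s) (w r) (w s) (n r) (hw' r)
  have hD2 : ∀ r s, qp (q * (x r / x s) * q ^ ((j r : ℤ) - (j s : ℤ))) q
      (((j r + w r : ℕ) : ℤ) - (j r : ℤ)) = ∏ m ∈ range (w r), (1 - X r * q ^ (m + 1) / X s) := by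
    intro r s
    have := D1_id q (x r) (x s) hq (j r) (j s) 0 0 (w r) (Nat.zero_le _)
    simp only [add_zero, pow_zero, mul_one, Nat.sub_zero, zero_add] at this
    rw [this]
    refine Finset.prod_congr rfl fun m _ => ?_
    rw [add_comm 1 m]
  have hD1' : (∏ r, ∏ s, ∏ m ∈ range (n r - w r), (1 - X r * q ^ (w r + 1 + m) / (X s * q ^ w s))) ≠ 0 := by
    refine Finset.prod_ne_zero_iff.mpr fun r _ => Finset.prod_ne_zero_iff.mpr fun s _ => ?_
    have := hd1 (fun k => j k + n k) (fun k => j k + w k) (fun k => by have := hw' k; simp; omega) r s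
    rw [hD1] at this
    exact this
  have hD2' : (∏ r, ∏ s, ∏ m ∈ range (w r), (1 - X r * q ^ (m + 1) / X s)) ≠ 0 := by
    refine Finset.prod_ne_zero_iff.mpr fun r _ => Finset.prod_ne_zero_iff.mpr fun s _ => ?_
    have := hd1 (fun k => j k + w k) j (fun k => by simp) r s
    rw [hD2] at this
    exact this
  have hV : (∏ i, ∏ j ∈ Ioi i, (X j * q ^ w j - X i * q ^ w i)) ≠ 0 := by
    refine Finset.prod_ne_zero_iff.mpr fun r _ => Finset.prod_ne_zero_iff.mpr fun s hs => ?_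
    intro h
    have hs' : r < s := by simpa using hs
    exact hs'.ne' (hinj s r _ _ (sub_eq_zero.mp h)).1
  have hc0' : c0 ≠ 0 := by
    refine Finset.prod_ne_zero_iff.mpr fun r _ => Finset.prod_ne_zero_iff.mpr fun s hs => ?_
    intro h
    have hs' : r < s := by simpa using hs
    refine hs'.ne (hinj r s 0 0 ?_).1
    simpa using sub_eq_zero.mp h
  have hXX : (∏ s, X s) ≠ 0 := Finset.prod_ne_zero_iff.mpr fun s _ => hX s
  simp only [MAstar, MA]
  rw [sI, int_choose, zpow_natCast, zpow_natCast]
  simp only [hrat, hD1, hD2, Finset.prod_inv_distrib]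
  rw [Finset.prod_mul_distrib]
  have hK2 : (∏ k, ∏ z ∈ ((Finset.univ : Finset (Fin ℓ)).sigma (fun k => range (n k + 1))).erase ⟨k, w k⟩,
        (v ⟨k, w k⟩ - v z)) = _ := hK
  rw [hK2]
  simp only [C, v]
  change _ * _ * (∏ r, ∏ s, ∏ m ∈ range (n r - w r), (1 - X r * q ^ (w r + 1 + m) / (X s * q ^ w s)))⁻¹ * _ * _ * _ = _
  have hs : (-1 : ℂ) ^ N = (-1) ^ (∑ s, w s) * (-1) ^ (∑ s, (n s - w s)) := by rw [← pow_add, ← sN]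
  have hqq : q ^ N.choose 2 = q ^ ((∑ s, w s).choose 2 + (∑ s, w s) * (∑ s, (n s - w s))) *
      q ^ ((∑ s, (n s - w s)).choose 2) := by rw [← pow_add, choose_mix, ← sN]
  rw [hs, hqq]
  generalize (∏ r, ∏ s, ∏ m ∈ range (n r - w r), (1 - X r * q ^ (w r + 1 + m) / (X s * q ^ w s))) = P1 at *
  generalize (∏ r, ∏ s, ∏ m ∈ range (w r), (1 - X r * q ^ (m + 1) / X s)) = P2 at *
  generalize (∏ i, ∏ j ∈ Ioi i, (X j * q ^ w j - X i * q ^ w i)) = V at *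
  generalize (∏ s, X s) = XX at *
  generalize (∏ k, qp (a * q * (x k / xl)) q (((j k + w k : ℕ) : ℤ) + ∑ s, (j s : ℤ))) = Q2 at *
  have hm : (-1 : ℂ) ^ (∑ s, w s) ≠ 0 := pow_ne_zero _ (by norm_num)
  have hqp : q ^ ((∑ s, w s).choose 2 + (∑ s, w s) * (∑ s, (n s - w s))) ≠ 0 := pow_ne_zero _ hq
  generalize (-1 : ℂ) ^ (∑ s, w s) = m1 at *
  generalize (-1 : ℂ) ^ (∑ s, (n s - w s)) = m2 at *
  generalize q ^ ((∑ s, w s).choose 2 + (∑ s, w s) * (∑ s, (n s - w s))) = q1 at *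
  generalize q ^ ((∑ s, (n s - w s)).choose 2) = q2 at *
  have hXN : XX ^ N ≠ 0 := pow_ne_zero _ hXX
  generalize XX ^ N = XN at *
  field_simp

lemma diag_case (ℓ : ℕ) (q a : ℂ)
    (hq : q ≠ 0) (x : Fin ℓ → ℂ) (xl : ℂ)
    (hd2 : ∀ i j : Fin ℓ → ℕ, (∀ k, j k ≤ i k) → ∀ k : Fin ℓ,
      qp (a * q * (x k / xl)) q ((i k : ℤ) + ∑ s, (j s : ℤ)) ≠ 0)
    (hd3 : ∀ k : Fin ℓ, (1 : ℂ) - a * (x k / xl) ≠ 0) (i : Fin ℓ → ℕ) :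
    MAstar ℓ q a x xl i i * MA ℓ q a x xl i i = 1 := by
  have h0 : ∀ c : ℂ, qp c q 0 = 1 := fun c => by simp [qp]
  simp only [MAstar, MA, sub_self, h0, inv_one, Finset.prod_const_one, mul_one, one_mul, zpow_zero,
    zero_mul, EuclideanDomain.zero_div]
  rw [← Finset.prod_mul_distrib, ← Finset.prod_mul_distrib]
  refine Finset.prod_eq_one fun k _ => ?_
  have hne := hd2 i i (fun _ => le_rfl) k
  have e : (i k : ℤ) + ∑ s, (i s : ℤ) = ((i k + ∑ s, i s : ℕ) : ℤ) := by push_cast; rfl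
  rw [e] at hne ⊢
  generalize (i k + ∑ s, i s) = t at hne ⊢
  rcases t with _ | m
  · have := hd3 k
    have hm : qp (a * q * (x k / xl)) q (((0 : ℕ) : ℤ) - 1) = (1 - a * (x k / xl))⁻¹ := by
      have : a * q * (x k / xl) * q⁻¹ = a * (x k / xl) := by field_simp
      simp [qp, this]
    rw [hm]
    simp only [Nat.cast_zero, h0, zpow_zero, mul_one, inv_one]
    exact mul_inv_cancel₀ this
  · have e2 : ((m + 1 : ℕ) : ℤ) - 1 = (m : ℤ) := by push_cast; ring
    rw [qp_nat] at hne
    rw [e2, qp_nat, qp_nat, zpow_natCast]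
    have : (1 - a * (x k / xl) * q ^ (m + 1)) * ∏ k_1 ∈ range m, (1 - a * q * (x k / xl) * q ^ k_1) =
        ∏ k_1 ∈ range (m + 1), (1 - a * q * (x k / xl) * q ^ k_1) := by
      rw [Finset.prod_range_succ]; ring
    rw [this, mul_inv_cancel₀ hne]

/-- **A_ℓ Bailey Transform, second orthogonality relation.**
For generic parameters, `∑_{j ≤ y ≤ i} M*(i;y) M(y;j) = ∏_k δ(i_k, j_k)`. -/
theorem Al_bailey_transform_second (ℓ : ℕ) (hℓ : 1 ≤ ℓ) (q a : ℂ)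
    (hq : q ≠ 0) (ha : a ≠ 0) (x : Fin ℓ → ℂ) (hx : ∀ k, x k ≠ 0)
    (xl : ℂ) (hxl : xl = x ⟨ℓ - 1, by omega⟩)
    (hd1 : ∀ i j : Fin ℓ → ℕ, (∀ k, j k ≤ i k) → ∀ r s : Fin ℓ,
      qp (q * (x r / x s) * q ^ ((j r : ℤ) - (j s : ℤ))) q ((i r : ℤ) - (j r : ℤ)) ≠ 0)
    (hd2 : ∀ i j : Fin ℓ → ℕ, (∀ k, j k ≤ i k) → ∀ k : Fin ℓ,
      qp (a * q * (x k / xl)) q ((i k : ℤ) + ∑ s, (j s : ℤ)) ≠ 0)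
    (hd3 : ∀ k : Fin ℓ, (1 : ℂ) - a * (x k / xl) ≠ 0) :
    ∀ i j : Fin ℓ → ℕ,
      ∑ y ∈ Finset.Icc j i, MAstar ℓ q a x xl i y * MA ℓ q a x xl y j =
        ∏ k, (if i k = j k then (1 : ℂ) else 0) := by
  intro i j
  by_cases hle : j ≤ i
  · by_cases hij : i = j
    · subst hij
      simp only [Finset.Icc_self, Finset.sum_singleton, if_true, Finset.prod_const_one]
      exact diag_case ℓ q a hq x xl hd2 hd3 i
    · obtain ⟨k, hk⟩ := Function.ne_iff.mp hij
      rw [Finset.prod_eq_zero (Finset.mem_univ k) (by simp [hk])]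
      let n : Fin ℓ → ℕ := fun k => i k - j k
      have hi : (fun k => j k + n k) = i := by
        ext k; have : j k ≤ i k := hle k; simp only [n]; omega
      have hn : 1 ≤ ∑ k, n k := by
        refine le_trans ?_ (Finset.single_le_sum (f := n) (fun _ _ => Nat.zero_le _) (Finset.mem_univ k))
        have : j k ≤ i k := hle k; simp only [n]; omega
      have := main_case ℓ hℓ q a hq x hx xl hd1 hd2 j n hn
      rw [hi] at this
      rw [← this]
      refine Finset.sum_nbij' (fun y k => y k - j k) (fun w k => j k + w k) ?_ ?_ ?_ ?_ ?_
      · intro y hy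
        rw [Finset.mem_Icc] at hy
        rw [Fintype.mem_piFinset]
        intro k
        have : j k ≤ y k := hy.1 k; have : y k ≤ i k := hy.2 k
        simp only [n, Finset.mem_range]; omega
      · intro w hw
        rw [Fintype.mem_piFinset] at hw
        rw [Finset.mem_Icc]
        constructor
        · intro k; simp
        · intro k
          have := hw k; have : j k ≤ i k := hle k
          simp only [n, Finset.mem_range] at *; omega
      · intro y hy
        rw [Finset.mem_Icc] at hy
        ext k; have : j k ≤ y k := hy.1 k; exact Nat.add_sub_cancel' this
      · intro w hw
        ext k; simp
      · intro y hy
        rw [Finset.mem_Icc] at hy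
        have : (fun k => j k + (y k - j k)) = y := by
          ext k; have : j k ≤ y k := hy.1 k; exact Nat.add_sub_cancel' this
        rw [this]
  · rw [Finset.Icc_eq_empty hle, Finset.sum_empty]
    rw [Pi.le_def] at hle
    obtain ⟨k, hk⟩ := not_forall.mp hle
    have hk : i k < j k := not_le.mp hk
    rw [Finset.prod_eq_zero (Finset.mem_univ k) (if_neg hk.ne)]
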